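/- Let P = u,w₁,…,w_{2k−1},v be a path on 2k+1 vertices with k ≥ 1 and let L be an m-assignment for P. For c ∈ L(u) and d ∈ L(v), let N(c,d) be the number of proper L-colorings of P that color u with c and v with d. Then Σ_{(c,d) ∈ L(u)×L(v), c ≠ d} N(c,d) ≥ (m−1)^{2k+1} − (m−1). -/

import Mathlib

/-!
The sum counts the proper list colorings of the cycle obtained by joining the two ends of the path,
so the claim is that an `m`-assignment on an odd cycle with `n + 1 = 2k + 1` vertices admits at
least `(m-1)^(n+1) - (m-1)` proper colorings. Write `m = q + 1`.

If two cyclically adjacent vertices have different lists, rotate the cycle so that they become the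
first and the last vertex of the path (`cycleFinset_card_rotate`), and pick a color
`a ∈ L 0 \ L (last)`. Color the path greedily starting from vertex `0`: each of the vertices
`1, …, n-1` has at least `q` available colors, and the last one has at least `q` of them if vertex
`0` got the color `a`, and at least `q - 1` otherwise. This gives at least
`q ^ n + q * (q ^ (n-1) * (q - 1)) = q ^ (n+1)` colorings (`pow_le_cycle_of_ne`).

If all lists are equal, then for each first color the number `o n` of path colorings with a
different last color satisfies `o 0 = 0` and `o n + o (n+1) = q ^ (n+1)`, which gives
`(q + 1) * o (2k) + q = q ^ (2k+1)` (`offdiag_const`).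
-/

/-- `N(c,d)` for a path: the number of proper `L`-colorings of the path
`x_0, x_1, …, x_n` (on `n+1` vertices, with consecutive vertices adjacent)
that color `x_0` with `c` and `x_n` with `d`.  A proper `L`-coloring assigns each vertex a
color from its list so that adjacent vertices get different colors. -/
noncomputable def pathCount (n : ℕ) (L : Fin (n+1) → Finset ℕ) (c d : ℕ) : ℕ :=
  Nat.card {f : Fin (n+1) → ℕ // (∀ v, f v ∈ L v) ∧
    (∀ i : Fin n, f i.castSucc ≠ f i.succ) ∧ f 0 = c ∧ f (Fin.last n) = d}

open Finset in
theorem pathCount_eq_card (n : ℕ) (L : Fin (n+1) → Finset ℕ) (c d : ℕ) :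
    pathCount n L c d = #{f ∈ Fintype.piFinset L |
      (∀ i : Fin n, f i.castSucc ≠ f i.succ) ∧ f 0 = c ∧ f (Fin.last n) = d} := by
  rw [pathCount, ← Nat.card_eq_finsetCard]
  apply Nat.card_congr
  apply Equiv.subtypeEquivRight
  intro f
  simp [Fintype.mem_piFinset]

theorem pathCount_zero_self (L : Fin 1 → Finset ℕ) (c : ℕ) (hc : c ∈ L 0) :
    pathCount 0 L c c = 1 := by
  rw [pathCount_eq_card, Finset.card_eq_one]
  refine ⟨fun _ => c, ?_⟩
  ext f
  simp only [Finset.mem_filter, Fintype.mem_piFinset, Finset.mem_singleton]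
  constructor
  · rintro ⟨-, -, h, -⟩
    funext i
    rw [Fin.fin_one_eq_zero i, h]
  · rintro rfl
    refine ⟨fun i => by rwa [Fin.fin_one_eq_zero i], fun i => i.elim0, rfl, rfl⟩

theorem pathCount_zero_ne (L : Fin 1 → Finset ℕ) (c d : ℕ) (h : c ≠ d) :
    pathCount 0 L c d = 0 := by
  rw [pathCount_eq_card, Finset.card_eq_zero, Finset.filter_eq_empty_iff]
  rintro f - ⟨-, h0, h1⟩
  exact h (h0.symm.trans h1)

/-- Transfer-matrix recursion: sort the colorings by the color of the last vertex but one. -/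
theorem pathCount_succ (n : ℕ) (L : Fin (n+2) → Finset ℕ) (c d : ℕ)
    (hd : d ∈ L (Fin.last (n+1))) :
    pathCount (n+1) L c d = ∑ x ∈ (L (Fin.last n).castSucc).erase d,
      pathCount n (fun i => L i.castSucc) c x := by
  rw [pathCount_eq_card, Finset.card_eq_sum_card_fiberwise
    (f := fun f => f (Fin.last n).castSucc) (t := (L (Fin.last n).castSucc).erase d)]
  · refine Finset.sum_congr rfl fun x hx => ?_
    rw [pathCount_eq_card]
    refine Finset.card_nbij' (fun f => Fin.init f) (fun g => Fin.snoc g d) ?_ ?_ ?_ ?_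
    · intro f hf
      simp only [Finset.coe_filter, Finset.mem_filter, Fintype.mem_piFinset,
        Set.mem_ofPred_eq] at hf ⊢
      obtain ⟨⟨hL, hp, h0, -⟩, hx'⟩ := hf
      exact ⟨fun i => hL i.castSucc, fun i => hp i.castSucc, h0, hx'⟩
    · intro g hg
      simp only [Finset.coe_filter, Finset.mem_filter, Fintype.mem_piFinset,
        Set.mem_ofPred_eq] at hg ⊢
      obtain ⟨hL, hp, h0, hl⟩ := hg
      refine ⟨⟨?_, ?_, ?_, ?_⟩, ?_⟩
      · intro i
        refine Fin.lastCases ?_ (fun i => ?_) i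
        · simpa using hd
        · simpa using hL i
      · intro i
        refine Fin.lastCases ?_ (fun i => ?_) i
        · rw [Fin.succ_last, Fin.snoc_castSucc, Fin.snoc_last, hl]
          exact Finset.ne_of_mem_erase hx
        · rw [← Fin.castSucc_succ, Fin.snoc_castSucc, Fin.snoc_castSucc]
          exact hp i
      · rw [← Fin.castSucc_zero, Fin.snoc_castSucc, h0]
      · simp
      · simpa using hl
    · intro f hf
      simp only [Finset.coe_filter, Finset.mem_filter, Set.mem_ofPred_eq] at hf
      obtain ⟨⟨-, -, -, rfl⟩, -⟩ := hf
      exact Fin.snoc_init_self f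
    · intro g _
      exact Fin.init_snoc (α := fun _ => ℕ) _ _
  · intro f hf
    simp only [Finset.coe_filter, Fintype.mem_piFinset, Set.mem_ofPred_eq] at hf
    obtain ⟨hL, hp, -, hl⟩ := hf
    simp only [Finset.coe_erase, Set.mem_sdiff, Finset.mem_coe, Set.mem_singleton_iff]
    refine ⟨hL _, ?_⟩
    rw [← hl]
    exact hp (Fin.last n)

/-- Sum of the recursion over a set `T` of allowed last colors, with the order of summation
exchanged: the coloring of the first `n + 1` vertices is chosen before the last color. -/
theorem sum_pathCount_succ (n : ℕ) (L : Fin (n+2) → Finset ℕ) (c : ℕ) (T : Finset ℕ)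
    (hT : T ⊆ L (Fin.last (n+1))) :
    ∑ d ∈ T, pathCount (n+1) L c d = ∑ x ∈ L (Fin.last n).castSucc,
      (T.erase x).card * pathCount n (fun i => L i.castSucc) c x := by
  rw [Finset.sum_congr rfl fun d hd => pathCount_succ n L c d (hT hd)]
  rw [Finset.sum_comm' (t' := L (Fin.last n).castSucc) (s' := fun x => T.erase x)]
  · simp
  · intro x y
    simp only [Finset.mem_erase]
    tauto

/-- Greedy coloring: each step leaves at least `q` choices. -/
theorem pow_le_sum_pathCount (q n : ℕ) (L : Fin (n+1) → Finset ℕ) (hL : ∀ v, (L v).card = q + 1)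
    (c : ℕ) (hc : c ∈ L 0) : q ^ n ≤ ∑ d ∈ L (Fin.last n), pathCount n L c d := by
  induction n with
  | zero =>
    rw [pow_zero, ← pathCount_zero_self L c hc]
    exact Finset.single_le_sum (f := fun d => pathCount 0 L c d) (fun _ _ => Nat.zero_le _) hc
  | succ n ih =>
    rw [sum_pathCount_succ n L c _ subset_rfl, pow_succ']
    refine (Nat.mul_le_mul_left q (ih (fun i => L i.castSucc) (fun v => hL _) hc)).trans ?_
    rw [Finset.mul_sum]
    refine Finset.sum_le_sum fun x _ => Nat.mul_le_mul_right _ ?_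
    have := Finset.pred_card_le_card_erase (s := L (Fin.last (n+1))) (a := x)
    rw [hL] at this
    exact this

/-- Greedy coloring with the last color restricted to `T`. The bound `#T - 1` on the number of
choices at the last step also covers the case that the previous color lies in `T`. -/
theorem mul_pow_le_sum_pathCount_succ (q r n : ℕ) (L : Fin (n+2) → Finset ℕ)
    (hL : ∀ v, (L v).card = q + 1) (c : ℕ) (hc : c ∈ L 0) (T : Finset ℕ)
    (hT : T ⊆ L (Fin.last (n+1))) (hr : r ≤ T.card - 1) :
    r * q ^ n ≤ ∑ d ∈ T, pathCount (n+1) L c d := by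
  rw [sum_pathCount_succ n L c T hT]
  refine (Nat.mul_le_mul_left r
    (pow_le_sum_pathCount q n (fun i => L i.castSucc) (fun v => hL _) c hc)).trans ?_
  rw [Finset.mul_sum]
  exact Finset.sum_le_sum fun x _ =>
    Nat.mul_le_mul_right _ (hr.trans Finset.pred_card_le_card_erase)

/-- The proper `L`-colorings of the cycle with vertices `0, …, n`. Addition in `Fin (n+1)` wraps
around, so `i` and `i + 1` are the cyclically consecutive vertices. -/
def cycleFinset (n : ℕ) (L : Fin (n+1) → Finset ℕ) : Finset (Fin (n+1) → ℕ) :=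
  {f ∈ Fintype.piFinset L | ∀ i, f i ≠ f (i + 1)}

theorem mem_cycleFinset {n : ℕ} {L : Fin (n+1) → Finset ℕ} {f : Fin (n+1) → ℕ} :
    f ∈ cycleFinset n L ↔ (∀ i, f i ∈ L i) ∧ (∀ i : Fin n, f i.castSucc ≠ f i.succ) ∧
      f 0 ≠ f (Fin.last n) := by
  simp only [cycleFinset, Finset.mem_filter, Fintype.mem_piFinset, Fin.forall_fin_succ',
    Fin.coeSucc_eq_succ, Fin.last_add_one]
  rw [ne_comm (a := f 0)]

theorem cycleFinset_card_eq_sum (n : ℕ) (L : Fin (n+1) → Finset ℕ) :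
    (cycleFinset n L).card =
      ∑ p ∈ ((L 0) ×ˢ (L (Fin.last n))).filter (fun p => p.1 ≠ p.2),
        pathCount n L p.1 p.2 := by
  rw [Finset.card_eq_sum_card_fiberwise (f := fun f => (f 0, f (Fin.last n)))
    (t := ((L 0) ×ˢ (L (Fin.last n))).filter (fun p => p.1 ≠ p.2))]
  · refine Finset.sum_congr rfl fun p hp => ?_
    rw [pathCount_eq_card]
    congr 1
    ext f
    obtain ⟨c, d⟩ := p
    simp only [Finset.mem_filter, mem_cycleFinset, Fintype.mem_piFinset, Prod.mk.injEq] at hp ⊢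
    constructor
    · rintro ⟨⟨h1, h2, -⟩, h3⟩
      exact ⟨h1, h2, h3⟩
    · rintro ⟨h1, h2, rfl, rfl⟩
      exact ⟨⟨h1, h2, hp.2⟩, rfl, rfl⟩
  · intro f hf
    rw [Finset.mem_coe, mem_cycleFinset] at hf
    simpa using ⟨⟨hf.1 _, hf.1 _⟩, hf.2.2⟩

theorem cycleFinset_card_eq_sum_sum (n : ℕ) (L : Fin (n+1) → Finset ℕ) :
    (cycleFinset n L).card =
      ∑ c ∈ L 0, ∑ d ∈ (L (Fin.last n)).erase c, pathCount n L c d := by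
  rw [cycleFinset_card_eq_sum, Finset.sum_filter, Finset.sum_product]
  refine Finset.sum_congr rfl fun c _ => ?_
  rw [← Finset.sum_filter]
  refine Finset.sum_congr ?_ fun _ _ => rfl
  ext d
  simp only [Finset.mem_filter, Finset.mem_erase]
  tauto

theorem cycleFinset_card_rotate (n : ℕ) (L : Fin (n+1) → Finset ℕ) (j : Fin (n+1)) :
    (cycleFinset n fun i => L (i + j)).card = (cycleFinset n L).card := by
  refine Finset.card_nbij' (fun f i => f (i - j)) (fun f i => f (i + j)) ?_ ?_ ?_ ?_
  · intro f hf
    simp only [cycleFinset, Finset.coe_filter, Fintype.mem_piFinset, Set.mem_ofPred_eq] at hf ⊢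
    refine ⟨fun i => by simpa using hf.1 (i - j), fun i => ?_⟩
    have := hf.2 (i - j)
    rwa [show i - j + 1 = i + 1 - j by abel] at this
  · intro f hf
    simp only [cycleFinset, Finset.coe_filter, Fintype.mem_piFinset, Set.mem_ofPred_eq] at hf ⊢
    refine ⟨fun i => hf.1 (i + j), fun i => ?_⟩
    have := hf.2 (i + j)
    rwa [show i + j + 1 = i + 1 + j by abel] at this
  · intro f _
    funext i
    simp
  · intro f _
    funext i
    simp

theorem pow_le_cycle_of_ne (q n : ℕ) (L : Fin (n+2) → Finset ℕ)
    (hL : ∀ v, (L v).card = q + 1) (hne : L 0 ≠ L (Fin.last (n+1))) :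
    q ^ (n+2) ≤ (cycleFinset (n+1) L).card := by
  obtain ⟨a, ha, ha'⟩ : ∃ a ∈ L 0, a ∉ L (Fin.last (n+1)) := by
    by_contra! h
    exact hne (Finset.eq_of_subset_of_card_le h (by rw [hL, hL]))
  rw [cycleFinset_card_eq_sum_sum, ← Finset.add_sum_erase _ _ ha]
  have h1 : q * q ^ n ≤ ∑ d ∈ (L (Fin.last (n+1))).erase a, pathCount (n+1) L a d := by
    refine mul_pow_le_sum_pathCount_succ q q n L hL a ha _ (Finset.erase_subset _ _) ?_
    rw [Finset.erase_eq_of_notMem ha', hL, Nat.add_sub_cancel]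
  have h2 : q * ((q - 1) * q ^ n) ≤ ∑ c ∈ (L 0).erase a,
      ∑ d ∈ (L (Fin.last (n+1))).erase c, pathCount (n+1) L c d := by
    have hcard : ((L 0).erase a).card = q := by
      rw [Finset.card_erase_of_mem ha, hL, Nat.add_sub_cancel]
    rw [← smul_eq_mul, ← hcard]
    refine Finset.card_nsmul_le_sum _ _ _ fun c hc => ?_
    rw [hcard]
    refine mul_pow_le_sum_pathCount_succ q (q - 1) n L hL c (Finset.mem_of_mem_erase hc) _
      (Finset.erase_subset _ _) ?_
    have := Finset.pred_card_le_card_erase (s := L (Fin.last (n+1))) (a := c)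
    rw [hL] at this
    omega
  refine le_trans (le_of_eq ?_) (add_le_add h1 h2)
  cases q with
  | zero => simp
  | succ q => simp only [Nat.add_sub_cancel]; ring

theorem sum_pathCount_const (q n : ℕ) (S : Finset ℕ) (hS : S.card = q + 1) (c : ℕ) (hc : c ∈ S) :
    ∑ d ∈ S, pathCount n (fun _ => S) c d = q ^ n := by
  induction n with
  | zero =>
    rw [Finset.sum_eq_single_of_mem c hc fun d _ h => pathCount_zero_ne _ _ _ h.symm,
      pathCount_zero_self _ _ hc, pow_zero]
  | succ n ih =>
    rw [sum_pathCount_succ n (fun _ => S) c S subset_rfl, pow_succ', ← ih, Finset.mul_sum]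
    refine Finset.sum_congr rfl fun x hx => ?_
    rw [Finset.card_erase_of_mem hx, hS, Nat.add_sub_cancel]

/-- The colorings returning to the color `c` after `n + 1` steps are the ones that avoid `c` after
`n` steps; hence the two consecutive off-diagonal sums add up to the number of all colorings. -/
theorem offdiag_add_offdiag_succ (q n : ℕ) (S : Finset ℕ) (hS : S.card = q + 1) (c : ℕ)
    (hc : c ∈ S) :
    ∑ d ∈ S.erase c, pathCount n (fun _ => S) c d +
      ∑ d ∈ S.erase c, pathCount (n+1) (fun _ => S) c d = q ^ (n+1) := by
  rw [← sum_pathCount_const q (n+1) S hS c hc, ← Finset.add_sum_erase S _ hc,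
    pathCount_succ n (fun _ => S) c c hc]

theorem offdiag_const (q k : ℕ) (S : Finset ℕ) (hS : S.card = q + 1) (c : ℕ) (hc : c ∈ S) :
    (q + 1) * ∑ d ∈ S.erase c, pathCount (2*k) (fun _ => S) c d + q = q ^ (2*k+1) := by
  induction k with
  | zero =>
    have : ∑ d ∈ S.erase c, pathCount 0 (fun _ => S) c d = 0 :=
      Finset.sum_eq_zero fun d hd => pathCount_zero_ne _ _ _ (Finset.ne_of_mem_erase hd).symm
    simp [this]
  | succ k ih =>
    have h1 := offdiag_add_offdiag_succ q (2*k) S hS c hc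
    have h2 := offdiag_add_offdiag_succ q (2*k+1) S hS c hc
    rw [show 2 * (k+1) = 2*k+1+1 by ring]
    zify at ih h1 h2 ⊢
    linear_combination ih + (q + 1) * h2 - (q + 1) * h1

/-- Let `P = u, w₁, …, w_{2k-1}, v` be a path on `2k+1` vertices (`k ≥ 1`) and `L` an
`m`-assignment for `P`.  With `N(c,d)` the number of proper `L`-colorings of `P` coloring
`u` with `c` and `v` with `d`:
`Σ_{(c,d) ∈ L(u)×L(v), c ≠ d} N(c,d) ≥ (m-1)^{2k+1} - (m-1)`. -/
theorem path_even_sum_offdiagonal (k m : ℕ) (hk : 1 ≤ k)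
    (L : Fin (2*k+1) → Finset ℕ) (hL : ∀ v, (L v).card = m) :
    (m - 1)^(2*k+1) - (m - 1) ≤
      ∑ p ∈ ((L 0) ×ˢ (L (Fin.last (2*k)))).filter (fun p => p.1 ≠ p.2),
        pathCount (2*k) L p.1 p.2 := by
  rw [← cycleFinset_card_eq_sum]
  obtain _ | q := m
  · simp
  rw [Nat.add_sub_cancel]
  by_cases h : ∀ i, L i = L (i + 1)
  · have hconst : ∀ i, L i = L 0 := by
      intro i
      induction i using Fin.induction with
      | zero => rfl
      | succ i ih => rw [← Fin.coeSucc_eq_succ, ← h, ih]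
    obtain ⟨S, rfl⟩ : ∃ S, L = fun _ => S := ⟨L 0, funext hconst⟩
    have hS : S.card = q + 1 := hL 0
    obtain ⟨a, ha⟩ : S.Nonempty := Finset.card_pos.mp (by omega)
    rw [cycleFinset_card_eq_sum_sum]
    have hq : ∀ c ∈ S, (q + 1) * ∑ d ∈ S.erase c, pathCount (2*k) (fun _ => S) c d =
        q ^ (2*k+1) - q := fun c hc => by
      rw [← offdiag_const q k S hS c hc, Nat.add_sub_cancel]
    -- The inner sum does not depend on the first color `c`.
    have hsame : ∀ c ∈ S, ∑ d ∈ S.erase c, pathCount (2*k) (fun _ => S) c d =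
        ∑ d ∈ S.erase a, pathCount (2*k) (fun _ => S) a d := fun c hc =>
      Nat.eq_of_mul_eq_mul_left q.succ_pos ((hq c hc).trans (hq a ha).symm)
    rw [Finset.sum_congr rfl hsame, Finset.sum_const, hS, smul_eq_mul, hq a ha]
  · push Not at h
    obtain ⟨i, hi⟩ := h
    obtain ⟨n, hn⟩ : ∃ n, 2 * k = n + 1 := ⟨2 * k - 1, by omega⟩
    rw [← cycleFinset_card_rotate _ L (i + 1)]
    generalize 2 * k = N at *
    subst hn
    refine (Nat.sub_le _ _).trans (pow_le_cycle_of_ne q n _ (fun v => hL _) ?_)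
    -- After the rotation, vertex `0` is the old `i + 1` and the last vertex is the old `i`.
    rw [zero_add, add_comm i 1, ← add_assoc, Fin.last_add_one, zero_add, add_comm 1 i]
    exact hi.symm
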